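/- arXiv:2107.07454 — 2 statements merged into one kernel-verified Lean document; each statement's English description precedes it below -/
import Mathlib

section
/- Let L_x, L_y > 0 and let w : ℝ² → ℝ be three times continuously differentiable on a neighborhood of the closed rectangle [0, L_x] × [0, L_y]. Assume w_x(0, y) = 0 for all y ∈ [0, L_y] (clamped-edge condition on Γ_W), and assume w_xx·w_yy = w_xy² holds at every point of the rectangle. Then ∫₀^{L_y} w_x(L_x, y)·w_yy(L_x, y) dy = ∫₀^{L_x} [ w_x(x, L_y)·w_xy(x, L_y) − w_x(x, 0)·w_xy(x, 0) ] dx. -/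
/-- Partial derivative in the first (span-wise, `x`) variable. -/
noncomputable def pdx (f : ℝ → ℝ → ℝ) (x y : ℝ) : ℝ := deriv (fun x' => f x' y) x

/-- Partial derivative in the second (chord-wise, `y`) variable. -/
noncomputable def pdy (f : ℝ → ℝ → ℝ) (x y : ℝ) : ℝ := deriv (fun y' => f x y') y

/-!
The Hessian determinant is a divergence,
`w_xx w_yy - w_xy² = ∂ₓ(wₓ w_yy) - ∂_y(wₓ wₓy)`,
because the two third-order terms `wₓ wₓyy` cancel. By Green's theorem its integral over a rectangle
is therefore a boundary integral, in which the clamped edge contributes nothing.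
-/

open Function MeasureTheory Set Topology
open scoped Interval

section Differentiability

variable {𝕜 E F G : Type*} [NontriviallyNormedField 𝕜] [NormedAddCommGroup E] [NormedSpace 𝕜 E]
  [NormedAddCommGroup F] [NormedSpace 𝕜 F] [NormedAddCommGroup G] [NormedSpace 𝕜 G]

theorem differentiableAt_fst_of_uncurry {f : E → F → G} {x : E} {y : F}
    (hf : DifferentiableAt 𝕜 (uncurry f) (x, y)) : DifferentiableAt 𝕜 (fun x' => f x' y) x :=
  hf.comp (f := fun x' => (x', y)) x (by fun_prop)

theorem differentiableAt_snd_of_uncurry {f : E → F → G} {x : E} {y : F}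
    (hf : DifferentiableAt 𝕜 (uncurry f) (x, y)) : DifferentiableAt 𝕜 (fun y' => f x y') y :=
  hf.comp (f := fun y' => (x, y')) y (by fun_prop)

theorem eventually_differentiableAt_of_contDiffAt {f : E → F} {p : E} (hf : ContDiffAt 𝕜 1 f p) :
    ∀ᶠ q in 𝓝 p, DifferentiableAt 𝕜 f q :=
  (hf.eventually (by simp)).mono fun _ hq => hq.differentiableAt one_ne_zero

theorem continuousAt_fderiv_apply {f : E → F} {p : E} (hf : ContDiffAt 𝕜 1 f p) (v : E) :
    ContinuousAt (fun q => fderiv 𝕜 f q v) p :=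
  (hf.fderiv_right (m := 0) (zero_add 1).le).continuousAt.clm_apply continuousAt_const

end Differentiability

section PartialDerivatives

variable {f g : ℝ → ℝ → ℝ} {x y : ℝ}

theorem pdx_eq_fderiv (hf : DifferentiableAt ℝ (uncurry f) (x, y)) :
    pdx f x y = fderiv ℝ (uncurry f) (x, y) (1, 0) :=
  (hf.hasFDerivAt.comp_hasDerivAt (f := fun x' => (x', y)) x
    ((hasDerivAt_id x).prodMk (hasDerivAt_const x y))).deriv

theorem pdy_eq_fderiv (hf : DifferentiableAt ℝ (uncurry f) (x, y)) :
    pdy f x y = fderiv ℝ (uncurry f) (x, y) (0, 1) :=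
  (hf.hasFDerivAt.comp_hasDerivAt (f := fun y' => (x, y')) y
    ((hasDerivAt_const y x).prodMk (hasDerivAt_id y))).deriv

theorem pdx_mul (hf : DifferentiableAt ℝ (fun x' => f x' y) x)
    (hg : DifferentiableAt ℝ (fun x' => g x' y) x) :
    pdx (f * g) x y = pdx f x y * g x y + f x y * pdx g x y :=
  deriv_mul hf hg

theorem pdy_mul (hf : DifferentiableAt ℝ (fun y' => f x y') y)
    (hg : DifferentiableAt ℝ (fun y' => g x y') y) :
    pdy (f * g) x y = pdy f x y * g x y + f x y * pdy g x y :=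
  deriv_mul hf hg

theorem pdy_congr_of_eventuallyEq (h : uncurry f =ᶠ[𝓝 (x, y)] uncurry g) :
    pdy f x y = pdy g x y :=
  have slice : ContinuousAt (fun y' : ℝ => (x, y')) y := by fun_prop
  Filter.EventuallyEq.deriv_eq (slice.eventually h)

theorem uncurry_pdx_eventuallyEq_fderiv (hf : ContDiffAt ℝ 1 (uncurry f) (x, y)) :
    uncurry (pdx f) =ᶠ[𝓝 (x, y)] fun q => fderiv ℝ (uncurry f) q (1, 0) :=
  (eventually_differentiableAt_of_contDiffAt hf).mono fun _ hq => pdx_eq_fderiv hq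

theorem uncurry_pdy_eventuallyEq_fderiv (hf : ContDiffAt ℝ 1 (uncurry f) (x, y)) :
    uncurry (pdy f) =ᶠ[𝓝 (x, y)] fun q => fderiv ℝ (uncurry f) q (0, 1) :=
  (eventually_differentiableAt_of_contDiffAt hf).mono fun _ hq => pdy_eq_fderiv hq

variable {m n : WithTop ℕ∞}

theorem contDiffAt_pdx (hf : ContDiffAt ℝ n (uncurry f) (x, y)) (hmn : m + 1 ≤ n) :
    ContDiffAt ℝ m (uncurry (pdx f)) (x, y) :=
  ((hf.fderiv_right hmn).clm_apply contDiffAt_const).congr_of_eventuallyEq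
    (uncurry_pdx_eventuallyEq_fderiv (hf.of_le (le_add_self.trans hmn)))

theorem contDiffAt_pdy (hf : ContDiffAt ℝ n (uncurry f) (x, y)) (hmn : m + 1 ≤ n) :
    ContDiffAt ℝ m (uncurry (pdy f)) (x, y) :=
  ((hf.fderiv_right hmn).clm_apply contDiffAt_const).congr_of_eventuallyEq
    (uncurry_pdy_eventuallyEq_fderiv (hf.of_le (le_add_self.trans hmn)))

theorem pdx_pdy_comm (hf : ContDiffAt ℝ 2 (uncurry f) (x, y)) :
    pdx (pdy f) x y = pdy (pdx f) x y := by
  have hf₁ : ContDiffAt ℝ 1 (uncurry f) (x, y) := hf.of_le one_le_two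
  have hfderiv : DifferentiableAt ℝ (fderiv ℝ (uncurry f)) (x, y) :=
    (hf.fderiv_right (m := 1) one_add_one_eq_two.le).differentiableAt one_ne_zero
  have hsymm : IsSymmSndFDerivAt ℝ (uncurry f) (x, y) := hf.isSymmSndFDerivAt (by simp)
  rw [pdx_eq_fderiv ((contDiffAt_pdy hf one_add_one_eq_two.le).differentiableAt one_ne_zero),
    pdy_eq_fderiv ((contDiffAt_pdx hf one_add_one_eq_two.le).differentiableAt one_ne_zero),
    (uncurry_pdx_eventuallyEq_fderiv hf₁).fderiv_eq,
    (uncurry_pdy_eventuallyEq_fderiv hf₁).fderiv_eq,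
    fderiv_clm_apply hfderiv (by fun_prop), fderiv_clm_apply hfderiv (by fun_prop)]
  simpa using hsymm.eq (1, 0) (0, 1)

theorem pdx_pdy_pdy_eq_pdy_pdy_pdx (hf : ContDiffAt ℝ 3 (uncurry f) (x, y)) :
    pdx (pdy (pdy f)) x y = pdy (pdy (pdx f)) x y := by
  have hcomm : uncurry (pdx (pdy f)) =ᶠ[𝓝 (x, y)] uncurry (pdy (pdx f)) :=
    ((hf.of_le (by norm_num : (2 : WithTop ℕ∞) ≤ 3)).eventually (by simp)).mono
      fun _ hq => pdx_pdy_comm hq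
  calc pdx (pdy (pdy f)) x y
      = pdy (pdx (pdy f)) x y := pdx_pdy_comm (contDiffAt_pdy hf two_add_one_eq_three.le)
    _ = pdy (pdy (pdx f)) x y := pdy_congr_of_eventuallyEq hcomm

end PartialDerivatives

section Green

variable {E : Type*} [NormedAddCommGroup E] {a₁ b₁ a₂ b₂ : ℝ}

theorem intervalIntegrable_fst_of_continuousOn {f : ℝ → ℝ → E} {s : Set ℝ} {y : ℝ}
    (hf : ContinuousOn (uncurry f) ([[a₁, b₁]] ×ˢ s)) (hy : y ∈ s) :
    IntervalIntegrable (fun x => f x y) volume a₁ b₁ :=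
  (hf.comp (f := fun x => (x, y)) (by fun_prop) fun _ hx => ⟨hx, hy⟩).intervalIntegrable

theorem intervalIntegrable_snd_of_continuousOn {f : ℝ → ℝ → E} {s : Set ℝ} {x : ℝ}
    (hf : ContinuousOn (uncurry f) (s ×ˢ [[a₂, b₂]])) (hx : x ∈ s) :
    IntervalIntegrable (fun y => f x y) volume a₂ b₂ :=
  (hf.comp (f := fun y => (x, y)) (by fun_prop) fun _ hy => ⟨hx, hy⟩).intervalIntegrable

theorem integral_pdx_sub_pdy_eq_boundary {f g : ℝ → ℝ → ℝ}
    (hf : ∀ q ∈ [[a₁, b₁]] ×ˢ [[a₂, b₂]], ContDiffAt ℝ 1 (uncurry f) q)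
    (hg : ∀ q ∈ [[a₁, b₁]] ×ˢ [[a₂, b₂]], ContDiffAt ℝ 1 (uncurry g) q) :
    (∫ x in a₁..b₁, ∫ y in a₂..b₂, (pdx f x y - pdy g x y)) =
      (∫ y in a₂..b₂, (f b₁ y - f a₁ y)) - ∫ x in a₁..b₁, (g x b₂ - g x a₂) := by
  have hfd := fun q hq => (hf q hq).differentiableAt one_ne_zero
  have hgd := fun q hq => (hg q hq).differentiableAt one_ne_zero
  have hfc : ContinuousOn (uncurry f) ([[a₁, b₁]] ×ˢ [[a₂, b₂]]) :=
    fun q hq => (hf q hq).continuousAt.continuousWithinAt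
  have hgc : ContinuousOn (uncurry g) ([[a₁, b₁]] ×ˢ [[a₂, b₂]]) :=
    fun q hq => (hg q hq).continuousAt.continuousWithinAt
  have hdiv : (∫ x in a₁..b₁, ∫ y in a₂..b₂, (pdx f x y - pdy g x y)) =
      ∫ x in a₁..b₁, ∫ y in a₂..b₂,
        (fderiv ℝ (uncurry f) (x, y) (1, 0) + (-fderiv ℝ (uncurry g) (x, y)) (0, 1)) :=
    intervalIntegral.integral_congr fun x hx => intervalIntegral.integral_congr fun y hy => by
      simp only [pdx_eq_fderiv (hfd (x, y) ⟨hx, hy⟩), pdy_eq_fderiv (hgd (x, y) ⟨hx, hy⟩),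
        neg_apply, sub_eq_add_neg]
  have hinterior : Ioo (min a₁ b₁) (max a₁ b₁) ×ˢ Ioo (min a₂ b₂) (max a₂ b₂) ⊆
      [[a₁, b₁]] ×ˢ [[a₂, b₂]] :=
    prod_mono Ioo_subset_Icc_self Ioo_subset_Icc_self
  have hint : IntegrableOn
      (fun q => fderiv ℝ (uncurry f) q (1, 0) + (-fderiv ℝ (uncurry g) q) (0, 1))
      ([[a₁, b₁]] ×ˢ [[a₂, b₂]]) :=
    ContinuousOn.integrableOn_compact (isCompact_uIcc.prod isCompact_uIcc) fun q hq =>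
      ((continuousAt_fderiv_apply (hf q hq) (1, 0)).add
        (continuousAt_fderiv_apply (hg q hq) (0, 1)).neg).continuousWithinAt
  have hgreen := integral2_divergence_prod_of_hasFDerivAt (uncurry f) (-uncurry g)
    (fderiv ℝ (uncurry f)) (-fderiv ℝ (uncurry g)) a₁ a₂ b₁ b₂ hfc hgc.neg
    (fun q hq => (hfd q (hinterior hq)).hasFDerivAt)
    (fun q hq => (hgd q (hinterior hq)).hasFDerivAt.neg) hint
  simp only [Pi.neg_apply, uncurry_apply_pair, intervalIntegral.integral_neg] at hgreen
  rw [hdiv, hgreen,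
    intervalIntegral.integral_sub (intervalIntegrable_snd_of_continuousOn hfc right_mem_uIcc)
      (intervalIntegrable_snd_of_continuousOn hfc left_mem_uIcc),
    intervalIntegral.integral_sub (intervalIntegrable_fst_of_continuousOn hgc right_mem_uIcc)
      (intervalIntegrable_fst_of_continuousOn hgc left_mem_uIcc)]
  ring

end Green

section HessianDeterminant

/-- The Hessian determinant `w_xx w_yy - w_xy²`, used to express the developability of the graph of
`w` as `hessianDet w = 0`. The mixed derivative is taken first in `x`, then in `y`. -/
noncomputable def hessianDet (w : ℝ → ℝ → ℝ) (x y : ℝ) : ℝ :=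
  pdx (pdx w) x y * pdy (pdy w) x y - pdy (pdx w) x y ^ 2

variable {w : ℝ → ℝ → ℝ}

theorem hessianDet_eq_pdx_sub_pdy {x y : ℝ} (hw : ContDiffAt ℝ 3 (uncurry w) (x, y)) :
    hessianDet w x y = pdx (pdx w * pdy (pdy w)) x y - pdy (pdx w * pdy (pdx w)) x y := by
  have hwx := contDiffAt_pdx hw two_add_one_eq_three.le
  have hwxd := hwx.differentiableAt two_ne_zero
  have hwxyd := (contDiffAt_pdy hwx one_add_one_eq_two.le).differentiableAt one_ne_zero
  have hwyyd := (contDiffAt_pdy (contDiffAt_pdy hw two_add_one_eq_three.le)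
    one_add_one_eq_two.le).differentiableAt one_ne_zero
  rw [hessianDet,
    pdx_mul (differentiableAt_fst_of_uncurry hwxd) (differentiableAt_fst_of_uncurry hwyyd),
    pdy_mul (differentiableAt_snd_of_uncurry hwxd) (differentiableAt_snd_of_uncurry hwxyd),
    pdx_pdy_pdy_eq_pdy_pdy_pdx hw]
  ring

theorem integral_hessianDet_eq_boundary {a₁ b₁ a₂ b₂ : ℝ}
    (hw : ∀ q ∈ [[a₁, b₁]] ×ˢ [[a₂, b₂]], ContDiffAt ℝ 3 (uncurry w) q) :
    (∫ x in a₁..b₁, ∫ y in a₂..b₂, hessianDet w x y) =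
      (∫ y in a₂..b₂, (pdx w b₁ y * pdy (pdy w) b₁ y - pdx w a₁ y * pdy (pdy w) a₁ y)) -
        ∫ x in a₁..b₁, (pdx w x b₂ * pdy (pdx w) x b₂ - pdx w x a₂ * pdy (pdx w) x a₂) := by
  have hwx := fun q hq => contDiffAt_pdx (hw q hq) two_add_one_eq_three.le
  have hwy := fun q hq => contDiffAt_pdy (hw q hq) two_add_one_eq_three.le
  have hwxy := fun q hq => contDiffAt_pdy (hwx q hq) one_add_one_eq_two.le
  have hwyy := fun q hq => contDiffAt_pdy (hwy q hq) one_add_one_eq_two.le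
  have hdiv : (∫ x in a₁..b₁, ∫ y in a₂..b₂, hessianDet w x y) =
      ∫ x in a₁..b₁, ∫ y in a₂..b₂,
        (pdx (pdx w * pdy (pdy w)) x y - pdy (pdx w * pdy (pdx w)) x y) :=
    intervalIntegral.integral_congr fun x hx => intervalIntegral.integral_congr fun y hy =>
      hessianDet_eq_pdx_sub_pdy (hw (x, y) ⟨hx, hy⟩)
  rw [hdiv]
  exact integral_pdx_sub_pdy_eq_boundary
    (fun q hq => ((hwx q hq).of_le one_le_two).mul (hwyy q hq))
    (fun q hq => ((hwx q hq).of_le one_le_two).mul (hwxy q hq))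

end HessianDeterminant

/-- For a plate clamped along `Γ_W = {x = 0}` (so `wₓ(0,y) = 0`)
and satisfying `wₓₓ w_yy = wₓy²` pointwise, the east-edge integral of
`wₓ w_yy` equals the difference of the north/south edge integrals of `wₓ wₓy`. -/
theorem clamped_edge_boundary_identity
    (Lx Ly : ℝ) (hLx : 0 < Lx) (hLy : 0 < Ly)
    (w : ℝ → ℝ → ℝ) (U : Set (ℝ × ℝ)) (hU : IsOpen U)
    (hsub : Set.Icc (0 : ℝ) Lx ×ˢ Set.Icc (0 : ℝ) Ly ⊆ U)
    (hw : ContDiffOn ℝ 3 (fun q : ℝ × ℝ => w q.1 q.2) U)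
    (hclamp : ∀ y ∈ Set.Icc (0 : ℝ) Ly, pdx w 0 y = 0)
    (hgauss : ∀ x ∈ Set.Icc (0 : ℝ) Lx, ∀ y ∈ Set.Icc (0 : ℝ) Ly,
      pdx (pdx w) x y * pdy (pdy w) x y = (pdy (pdx w) x y) ^ 2) :
    (∫ y in (0 : ℝ)..Ly, pdx w Lx y * pdy (pdy w) Lx y)
      = ∫ x in (0 : ℝ)..Lx,
          (pdx w x Ly * pdy (pdx w) x Ly - pdx w x 0 * pdy (pdx w) x 0) := by
  simp only [← uIcc_of_le hLx.le, ← uIcc_of_le hLy.le] at hsub hclamp hgauss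
  have hboundary := integral_hessianDet_eq_boundary fun q hq =>
    hw.contDiffAt (hU.mem_nhds (hsub hq))
  have hflat : (∫ x in (0 : ℝ)..Lx, ∫ y in (0 : ℝ)..Ly, hessianDet w x y) = 0 :=
    intervalIntegral.integral_zero_ae <| .of_forall fun x hx =>
      intervalIntegral.integral_zero_ae <| .of_forall fun y hy =>
        sub_eq_zero.2 (hgauss x (uIoc_subset_uIcc hx) y (uIoc_subset_uIcc hy))
  have hwest : (∫ y in (0 : ℝ)..Ly,
      (pdx w Lx y * pdy (pdy w) Lx y - pdx w 0 y * pdy (pdy w) 0 y)) =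
      ∫ y in (0 : ℝ)..Ly, pdx w Lx y * pdy (pdy w) Lx y :=
    intervalIntegral.integral_congr fun y hy => by simp [hclamp y hy]
  rw [hflat, hwest] at hboundary
  exact sub_eq_zero.1 hboundary.symm
end

section
/- Let L_x, L_y > 0, D > 0, and let u, v, w, λ₁, λ₂, λ₃ : ℝ² × ℝ → ℝ be smooth on a neighborhood of [0, L_x] × [0, L_y] × ℝ. Suppose the Model I system holds at every point: u_tt + ∂_x λ₁ + ∂_y λ₃ = 0; v_tt + ∂_y λ₂ + ∂_x λ₃ = 0; and w_tt + D·Δ[(1 + |∇w|²)Δw] − D·∇·(|Δw|²∇w) + ∂_x(λ₁ w_x) + ∂_y(λ₂ w_y) + ∂_x(λ₃ w_y) + ∂_y(λ₃ w_x) = 0, where ∇ and Δ act in the spatial variables (x, y). Suppose further λ₁(L_x, y, t) = 0 and λ₂(x, L_y, t) = 0 for all admissible (y, t) and (x, t). Then λ₁(x, y, t) = ∫ₓ^{L_x}[u_tt + ∂_y λ₃](ξ, y, t) dξ, λ₂(x, y, t) = ∫_y^{L_y}[v_tt + ∂_x λ₃](x, ζ, t) dζ, and w satisfies the reduced equation: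 w_tt + D·Δ[(1 + |∇w|²)Δw] − D·∇·(|Δw|²∇w) + ∂_x( w_x ∫ₓ^{L_x} u_tt dξ ) + ∂_y( w_y ∫_y^{L_y} v_tt dζ ) + ∂_x( w_x ∫ₓ^{L_x} ∂_y λ₃ dξ ) + ∂_y( w_y ∫_y^{L_y} ∂_x λ₃ dζ ) + ∂_x(λ₃ w_y) + ∂_y(λ₃ w_x) = 0. -/
/-- Partial derivative in the first spatial variable `x`. -/
noncomputable def pX (f : ℝ → ℝ → ℝ → ℝ) (x y t : ℝ) : ℝ := deriv (fun s => f s y t) x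

/-- Partial derivative in the second spatial variable `y`. -/
noncomputable def pY (f : ℝ → ℝ → ℝ → ℝ) (x y t : ℝ) : ℝ := deriv (fun s => f x s t) y

/-- Partial derivative in the time variable `t`. -/
noncomputable def pT (f : ℝ → ℝ → ℝ → ℝ) (x y t : ℝ) : ℝ := deriv (fun s => f x y s) t

/-- Spatial Laplacian `Δf = fₓₓ + f_yy`. -/
noncomputable def lap (f : ℝ → ℝ → ℝ → ℝ) (x y t : ℝ) : ℝ :=
  pX (pX f) x y t + pY (pY f) x y t

/-- Squared spatial gradient `|∇f|² = fₓ² + f_y²`. -/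
noncomputable def gradSq (f : ℝ → ℝ → ℝ → ℝ) (x y t : ℝ) : ℝ :=
  (pX f x y t) ^ 2 + (pY f x y t) ^ 2

/-!
Integrating the `u`-equation from the free edge `x = Lx`, where `λ₁` vanishes, expresses `λ₁` as
an integral over `[x, Lx]`; likewise for `λ₂` and the edge `y = Ly`. On the boundary of the plate
these formulas hold on one side only, so they cannot simply be substituted under the two-sided
derivative in `∂ₓ(λ₁ wₓ)`. By the product rule, however, that derivative depends on `λ₁` and
`∂ₓλ₁` only through their values at the point, and both are known there: the first from the
integral formula, the second from the `u`-equation.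
-/

open Set MeasureTheory

section Calculus

variable {E F : Type*} [NormedAddCommGroup E] [NormedSpace ℝ E] [NormedAddCommGroup F]
  [NormedSpace ℝ F]

lemma eq_integral_of_hasDerivAt_neg [CompleteSpace F] {f g : ℝ → F} {a b : ℝ}
    (hf : ∀ s ∈ uIcc a b, HasDerivAt f (-g s) s) (hg : IntervalIntegrable g volume a b)
    (hb : f b = 0) : f a = ∫ s in a..b, g s := by
  have hFTC := intervalIntegral.integral_eq_sub_of_hasDerivAt hf hg.neg
  rwa [intervalIntegral.integral_neg, hb, zero_sub, neg_inj, eq_comm] at hFTC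

lemma hasDerivAt_mul_integral_left {A : Type*} [NormedRing A] [NormedAlgebra ℝ A] [CompleteSpace A]
    {f g : ℝ → A} {V : Set ℝ} {a b : ℝ} (hV : IsOpen V) (hab : uIcc a b ⊆ V)
    (hf : DifferentiableAt ℝ f a) (hg : ContinuousOn g V) :
    HasDerivAt (fun s => f s * ∫ r in s..b, g r)
      (deriv f a * (∫ r in a..b, g r) + f a * -g a) a :=
  have ha : a ∈ V := hab left_mem_uIcc
  hf.hasDerivAt.fun_mul <| intervalIntegral.integral_hasDerivAt_left
    (hg.mono hab).intervalIntegrable (hg.stronglyMeasurableAtFilter hV a ha)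
    (hg.continuousAt (hV.mem_nhds ha))

lemma deriv_mul_integral_add_deriv_mul_integral {f g h l : ℝ → ℝ} {V : Set ℝ} {a b : ℝ}
    (hV : IsOpen V) (hab : uIcc a b ⊆ V) (hf : DifferentiableAt ℝ f a)
    (hl : DifferentiableAt ℝ l a) (hg : ContinuousOn g V) (hh : ContinuousOn h V)
    (hla : l a = ∫ s in a..b, (g s + h s)) (hdl : g a + deriv l a + h a = 0) :
    deriv (fun s => f s * ∫ r in s..b, g r) a + deriv (fun s => f s * ∫ r in s..b, h r) a =
      deriv (fun s => l s * f s) a := by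
  rw [(hasDerivAt_mul_integral_left hV hab hf hg).deriv,
    (hasDerivAt_mul_integral_left hV hab hf hh).deriv, deriv_fun_mul hl hf, hla,
    intervalIntegral.integral_add (hg.mono hab).intervalIntegrable
      (hh.mono hab).intervalIntegrable]
  linear_combination (-f a) * hdl

variable {U : Set E} {γ : ℝ → E} {a b : ℝ}

lemma eq_integral_along_curve [CompleteSpace F] {g h l : E → F} (hU : IsOpen U)
    (hγ : Differentiable ℝ γ) (hγU : MapsTo γ (uIcc a b) U) (hl : DifferentiableOn ℝ l U)
    (hg : ContinuousOn g U) (hh : ContinuousOn h U)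
    (hdl : ∀ s ∈ uIcc a b, g (γ s) + deriv (fun r => l (γ r)) s + h (γ s) = 0)
    (hb : l (γ b) = 0) : l (γ a) = ∫ s in a..b, (g (γ s) + h (γ s)) := by
  refine eq_integral_of_hasDerivAt_neg (f := fun s => l (γ s)) (fun s hs => ?_)
    ((hg.add hh).comp hγ.continuous.continuousOn hγU).intervalIntegrable hb
  have hlγ : DifferentiableAt ℝ (fun r => l (γ r)) s :=
    (hl.differentiableAt (hU.mem_nhds (hγU hs))).comp s (hγ s)
  have hderiv : deriv (fun r => l (γ r)) s = -(g (γ s) + h (γ s)) := by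
    rw [eq_neg_iff_add_eq_zero, ← hdl s hs]
    abel
  exact hderiv ▸ hlγ.hasDerivAt

lemma deriv_mul_integral_add_along_curve {f g h l : E → ℝ} (hU : IsOpen U)
    (hγ : Differentiable ℝ γ) (hγU : MapsTo γ (uIcc a b) U) (hf : DifferentiableOn ℝ f U)
    (hl : DifferentiableOn ℝ l U) (hg : ContinuousOn g U) (hh : ContinuousOn h U)
    (hla : l (γ a) = ∫ s in a..b, (g (γ s) + h (γ s)))
    (hdl : g (γ a) + deriv (fun r => l (γ r)) a + h (γ a) = 0) :
    deriv (fun s => f (γ s) * ∫ r in s..b, g (γ r)) a +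
        deriv (fun s => f (γ s) * ∫ r in s..b, h (γ r)) a =
      deriv (fun s => l (γ s) * f (γ s)) a := by
  have hUa : U ∈ nhds (γ a) := hU.mem_nhds (hγU left_mem_uIcc)
  have hγ' : ContinuousOn γ (γ ⁻¹' U) := hγ.continuous.continuousOn
  exact deriv_mul_integral_add_deriv_mul_integral (hU.preimage hγ.continuous) hγU
    ((hf.differentiableAt hUa).comp a (hγ a)) ((hl.differentiableAt hUa).comp a (hγ a))
    (hg.comp hγ' (mapsTo_preimage γ U)) (hh.comp hγ' (mapsTo_preimage γ U)) hla hdl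

lemma contDiffOn_fderiv_apply_const {f : E → F} {m n : WithTop ℕ∞} (hU : IsOpen U)
    (hf : ContDiffOn ℝ n f U) (hmn : m + 1 ≤ n) (e : E) :
    ContDiffOn ℝ m (fun p => fderiv ℝ f p e) U :=
  (hf.fderiv_of_isOpen hU hmn).clm_apply contDiffOn_const

end Calculus

section PartialDerivatives

variable {f : ℝ → ℝ → ℝ → ℝ} {x y t : ℝ}

lemma pX_eq_fderiv (hf : DifferentiableAt ℝ ↿f (x, y, t)) :
    pX f x y t = fderiv ℝ ↿f (x, y, t) (1, 0, 0) :=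
  (hf.hasFDerivAt.comp_hasDerivAt (f := fun s => (s, y, t)) x
    ((hasDerivAt_id x).prodMk ((hasDerivAt_const x y).prodMk (hasDerivAt_const x t)))).deriv

lemma pY_eq_fderiv (hf : DifferentiableAt ℝ ↿f (x, y, t)) :
    pY f x y t = fderiv ℝ ↿f (x, y, t) (0, 1, 0) :=
  (hf.hasFDerivAt.comp_hasDerivAt (f := fun s => (x, s, t)) y
    ((hasDerivAt_const y x).prodMk ((hasDerivAt_id y).prodMk (hasDerivAt_const y t)))).deriv

lemma pT_eq_fderiv (hf : DifferentiableAt ℝ ↿f (x, y, t)) :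
    pT f x y t = fderiv ℝ ↿f (x, y, t) (0, 0, 1) :=
  (hf.hasFDerivAt.comp_hasDerivAt (f := fun s => (x, y, s)) t
    ((hasDerivAt_const t x).prodMk ((hasDerivAt_const t y).prodMk (hasDerivAt_id t)))).deriv

variable {U : Set (ℝ × ℝ × ℝ)} {m n : WithTop ℕ∞}

lemma contDiffOn_pX (hU : IsOpen U) (hf : ContDiffOn ℝ n ↿f U) (hmn : m + 1 ≤ n) :
    ContDiffOn ℝ m ↿(pX f) U :=
  (contDiffOn_fderiv_apply_const hU hf hmn (1, 0, 0)).congr fun _ hp =>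
    pX_eq_fderiv ((hf.of_le (le_add_self.trans hmn)).differentiableOn_one.differentiableAt
      (hU.mem_nhds hp))

lemma contDiffOn_pY (hU : IsOpen U) (hf : ContDiffOn ℝ n ↿f U) (hmn : m + 1 ≤ n) :
    ContDiffOn ℝ m ↿(pY f) U :=
  (contDiffOn_fderiv_apply_const hU hf hmn (0, 1, 0)).congr fun _ hp =>
    pY_eq_fderiv ((hf.of_le (le_add_self.trans hmn)).differentiableOn_one.differentiableAt
      (hU.mem_nhds hp))

lemma contDiffOn_pT (hU : IsOpen U) (hf : ContDiffOn ℝ n ↿f U) (hmn : m + 1 ≤ n) :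
    ContDiffOn ℝ m ↿(pT f) U :=
  (contDiffOn_fderiv_apply_const hU hf hmn (0, 0, 1)).congr fun _ hp =>
    pT_eq_fderiv ((hf.of_le (le_add_self.trans hmn)).differentiableOn_one.differentiableAt
      (hU.mem_nhds hp))

lemma continuousOn_pT_pT (hU : IsOpen U) (hf : ContDiffOn ℝ 2 ↿f U) :
    ContinuousOn ↿(pT (pT f)) U :=
  (contDiffOn_pT (m := 0) hU (contDiffOn_pT (m := 1) hU hf one_add_one_eq_two.le)
    (zero_add 1).le).continuousOn

end PartialDerivatives

/-- The elimination takes place at a single instant `t` and leaves `F` untouched, which stands for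
the inertial and bending terms `w_tt + D Δ[(1 + |∇w|²) Δw] - D ∇·(|Δw|² ∇w)`. -/
theorem modelI_reduction_general {Lx Ly t : ℝ} {u v w l1 l2 l3 : ℝ → ℝ → ℝ → ℝ}
    {F : ℝ → ℝ → ℝ} {U : Set (ℝ × ℝ × ℝ)} (hU : IsOpen U)
    (hsub : ∀ x ∈ Icc 0 Lx, ∀ y ∈ Icc 0 Ly, (x, y, t) ∈ U)
    (hu : ContDiffOn ℝ 2 ↿u U) (hv : ContDiffOn ℝ 2 ↿v U) (hw : ContDiffOn ℝ 2 ↿w U)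
    (hl1 : DifferentiableOn ℝ ↿l1 U) (hl2 : DifferentiableOn ℝ ↿l2 U) (hl3 : ContDiffOn ℝ 1 ↿l3 U)
    (hueq : ∀ x ∈ Icc 0 Lx, ∀ y ∈ Icc 0 Ly, pT (pT u) x y t + pX l1 x y t + pY l3 x y t = 0)
    (hveq : ∀ x ∈ Icc 0 Lx, ∀ y ∈ Icc 0 Ly, pT (pT v) x y t + pY l2 x y t + pX l3 x y t = 0)
    (hweq : ∀ x ∈ Icc 0 Lx, ∀ y ∈ Icc 0 Ly,
      F x y
        + pX (fun a b c => l1 a b c * pX w a b c) x y t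
        + pY (fun a b c => l2 a b c * pY w a b c) x y t
        + pX (fun a b c => l3 a b c * pY w a b c) x y t
        + pY (fun a b c => l3 a b c * pX w a b c) x y t = 0)
    (hbc1 : ∀ y ∈ Icc 0 Ly, l1 Lx y t = 0) (hbc2 : ∀ x ∈ Icc 0 Lx, l2 x Ly t = 0) :
    ∀ x ∈ Icc 0 Lx, ∀ y ∈ Icc 0 Ly,
      l1 x y t = (∫ ξ in x..Lx, (pT (pT u) ξ y t + pY l3 ξ y t)) ∧
      l2 x y t = (∫ ζ in y..Ly, (pT (pT v) x ζ t + pX l3 x ζ t)) ∧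
      F x y
        + pX (fun a b c => pX w a b c * ∫ ξ in a..Lx, pT (pT u) ξ b c) x y t
        + pY (fun a b c => pY w a b c * ∫ ζ in b..Ly, pT (pT v) a ζ c) x y t
        + pX (fun a b c => pX w a b c * ∫ ξ in a..Lx, pY l3 ξ b c) x y t
        + pY (fun a b c => pY w a b c * ∫ ζ in b..Ly, pX l3 a ζ c) x y t
        + pX (fun a b c => l3 a b c * pY w a b c) x y t
        + pY (fun a b c => l3 a b c * pX w a b c) x y t = 0 := by
  intro x hx y hy
  have hutt := continuousOn_pT_pT hU hu
  have hvtt := continuousOn_pT_pT hU hv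
  have hl3x := (contDiffOn_pX (m := 0) hU hl3 (zero_add 1).le).continuousOn
  have hl3y := (contDiffOn_pY (m := 0) hU hl3 (zero_add 1).le).continuousOn
  have hwx := (contDiffOn_pX hU hw one_add_one_eq_two.le).differentiableOn_one
  have hwy := (contDiffOn_pY hU hw one_add_one_eq_two.le).differentiableOn_one
  have hxLx : uIcc x Lx ⊆ Icc 0 Lx := uIcc_subset_Icc hx ⟨hx.1.trans hx.2, le_rfl⟩
  have hyLy : uIcc y Ly ⊆ Icc 0 Ly := uIcc_subset_Icc hy ⟨hy.1.trans hy.2, le_rfl⟩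
  have hγ₁ : Differentiable ℝ fun s : ℝ => (s, y, t) := by fun_prop
  have hγ₂ : Differentiable ℝ fun s : ℝ => (x, s, t) := by fun_prop
  have hγ₁U : MapsTo (fun s : ℝ => (s, y, t)) (uIcc x Lx) U := fun s hs => hsub s (hxLx hs) y hy
  have hγ₂U : MapsTo (fun s : ℝ => (x, s, t)) (uIcc y Ly) U := fun s hs => hsub x hx s (hyLy hs)
  have hl1_eq := eq_integral_along_curve hU hγ₁ hγ₁U hl1 hutt hl3y
    (fun s hs => hueq s (hxLx hs) y hy) (hbc1 y hy)
  have hl2_eq := eq_integral_along_curve hU hγ₂ hγ₂U hl2 hvtt hl3x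
    (fun s hs => hveq x hx s (hyLy hs)) (hbc2 x hx)
  have hl1_flux : pX (fun a b c => pX w a b c * ∫ ξ in a..Lx, pT (pT u) ξ b c) x y t
      + pX (fun a b c => pX w a b c * ∫ ξ in a..Lx, pY l3 ξ b c) x y t
      = pX (fun a b c => l1 a b c * pX w a b c) x y t :=
    deriv_mul_integral_add_along_curve (γ := fun s => (s, y, t)) hU hγ₁ hγ₁U hwx hl1
      hutt hl3y hl1_eq (hueq x hx y hy)
  have hl2_flux : pY (fun a b c => pY w a b c * ∫ ζ in b..Ly, pT (pT v) a ζ c) x y t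
      + pY (fun a b c => pY w a b c * ∫ ζ in b..Ly, pX l3 a ζ c) x y t
      = pY (fun a b c => l2 a b c * pY w a b c) x y t :=
    deriv_mul_integral_add_along_curve (γ := fun s => (x, s, t)) hU hγ₂ hγ₂U hwy hl2
      hvtt hl3x hl2_eq (hveq x hx y hy)
  refine ⟨hl1_eq, hl2_eq, ?_⟩
  linear_combination hweq x hx y hy + hl1_flux + hl2_flux

/-- Partial reduction of Model I: if the Model I system holds with
`λ₁ = 0` on `{x = Lx}` and `λ₂ = 0` on `{y = Ly}`, then `λ₁` and `λ₂` are given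
by integrals from the free edges, and `w` satisfies the reduced nonlocal
equation in `w` and the shear multiplier `λ₃`. -/
theorem modelI_reduction
    (Lx Ly D : ℝ) (hLx : 0 < Lx) (hLy : 0 < Ly) (hD : 0 < D)
    (u v w l1 l2 l3 : ℝ → ℝ → ℝ → ℝ)
    (U : Set (ℝ × ℝ × ℝ)) (hU : IsOpen U)
    (hsub : Set.Icc (0 : ℝ) Lx ×ˢ Set.Icc (0 : ℝ) Ly ×ˢ (Set.univ : Set ℝ) ⊆ U)
    (hus : ContDiffOn ℝ (⊤ : ℕ∞) (fun p : ℝ × ℝ × ℝ => u p.1 p.2.1 p.2.2) U)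
    (hvs : ContDiffOn ℝ (⊤ : ℕ∞) (fun p : ℝ × ℝ × ℝ => v p.1 p.2.1 p.2.2) U)
    (hws : ContDiffOn ℝ (⊤ : ℕ∞) (fun p : ℝ × ℝ × ℝ => w p.1 p.2.1 p.2.2) U)
    (hl1s : ContDiffOn ℝ (⊤ : ℕ∞) (fun p : ℝ × ℝ × ℝ => l1 p.1 p.2.1 p.2.2) U)
    (hl2s : ContDiffOn ℝ (⊤ : ℕ∞) (fun p : ℝ × ℝ × ℝ => l2 p.1 p.2.1 p.2.2) U)
    (hl3s : ContDiffOn ℝ (⊤ : ℕ∞) (fun p : ℝ × ℝ × ℝ => l3 p.1 p.2.1 p.2.2) U)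
    (hueq : ∀ x ∈ Set.Icc (0 : ℝ) Lx, ∀ y ∈ Set.Icc (0 : ℝ) Ly, ∀ t : ℝ,
      pT (pT u) x y t + pX l1 x y t + pY l3 x y t = 0)
    (hveq : ∀ x ∈ Set.Icc (0 : ℝ) Lx, ∀ y ∈ Set.Icc (0 : ℝ) Ly, ∀ t : ℝ,
      pT (pT v) x y t + pY l2 x y t + pX l3 x y t = 0)
    (hweq : ∀ x ∈ Set.Icc (0 : ℝ) Lx, ∀ y ∈ Set.Icc (0 : ℝ) Ly, ∀ t : ℝ,
      pT (pT w) x y t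
        + D * lap (fun a b c => (1 + gradSq w a b c) * lap w a b c) x y t
        - D * (pX (fun a b c => (lap w a b c) ^ 2 * pX w a b c) x y t
            + pY (fun a b c => (lap w a b c) ^ 2 * pY w a b c) x y t)
        + pX (fun a b c => l1 a b c * pX w a b c) x y t
        + pY (fun a b c => l2 a b c * pY w a b c) x y t
        + pX (fun a b c => l3 a b c * pY w a b c) x y t
        + pY (fun a b c => l3 a b c * pX w a b c) x y t = 0)
    (hbc1 : ∀ y ∈ Set.Icc (0 : ℝ) Ly, ∀ t : ℝ, l1 Lx y t = 0)
    (hbc2 : ∀ x ∈ Set.Icc (0 : ℝ) Lx, ∀ t : ℝ, l2 x Ly t = 0) :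
    ∀ x ∈ Set.Icc (0 : ℝ) Lx, ∀ y ∈ Set.Icc (0 : ℝ) Ly, ∀ t : ℝ,
      l1 x y t = (∫ ξ in x..Lx, (pT (pT u) ξ y t + pY l3 ξ y t)) ∧
      l2 x y t = (∫ ζ in y..Ly, (pT (pT v) x ζ t + pX l3 x ζ t)) ∧
      pT (pT w) x y t
        + D * lap (fun a b c => (1 + gradSq w a b c) * lap w a b c) x y t
        - D * (pX (fun a b c => (lap w a b c) ^ 2 * pX w a b c) x y t
            + pY (fun a b c => (lap w a b c) ^ 2 * pY w a b c) x y t)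
        + pX (fun a b c => pX w a b c * ∫ ξ in a..Lx, pT (pT u) ξ b c) x y t
        + pY (fun a b c => pY w a b c * ∫ ζ in b..Ly, pT (pT v) a ζ c) x y t
        + pX (fun a b c => pX w a b c * ∫ ξ in a..Lx, pY l3 ξ b c) x y t
        + pY (fun a b c => pY w a b c * ∫ ζ in b..Ly, pX l3 a ζ c) x y t
        + pX (fun a b c => l3 a b c * pY w a b c) x y t
        + pY (fun a b c => l3 a b c * pX w a b c) x y t
        = 0 := by
  intro x hx y hy t
  exact modelI_reduction_general hU (fun x hx y hy => hsub ⟨hx, hy, mem_univ t⟩)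
    (hus.of_le ENat.LEInfty.out) (hvs.of_le ENat.LEInfty.out) (hws.of_le ENat.LEInfty.out)
    (hl1s.differentiableOn (by simp)) (hl2s.differentiableOn (by simp))
    (hl3s.of_le ENat.LEInfty.out)
    (fun x hx y hy => hueq x hx y hy t) (fun x hx y hy => hveq x hx y hy t)
    (fun x hx y hy => hweq x hx y hy t) (fun y hy => hbc1 y hy t) (fun x hx => hbc2 x hx t)
    x hx y hy
end
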